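/- Let μ > 0 and λ ∈ ℝ with λ < 2μ, and let a be the solution of the soliton ODE a′ = 2λa³ − 4μa² with a(0) = 1. Then a extends to a strictly decreasing positive solution on [0, ∞) with a(t) → 0 as t → ∞, and the refined decay asymptotic holds: lim_{t→∞} (1 + 4μt)² · ( a(t) − 1/(1 + 4μt) ) / log(1 + 4μt) = λ/(2μ). -/

import Mathlib

open Set Filter

/-!
The substitution `a = 1 / u` turns the soliton ODE into `u' = 4μ (u - c) / u` with `c = λ / (2μ) < 1`,
which separates: `V(u(t)) = 1 + 4μt`, where `V(x) = x + c log ((x - c) / (1 - c))`. On the region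
`x > max c 0` the function `V` is strictly increasing with derivative `x / (x - c)`, and `V(1) = 1`.
Extending `V` affinely below a point `m` with `max c 0 < m < 1` gives an increasing homeomorphism
`profile` of `ℝ`; its inverse `ψ` yields the global solution `b(t) = 1 / ψ(1 + 4μt)`
(`exists_inverse_profile`). Since the cubic field is locally Lipschitz, `a` and `b` agree where both
are defined (`soliton_unique`).

For the asymptotics, write `v = 1 + 4μt` and `u = ψ(v)`, so `v - u = c log ((u - c) / (1 - c))` and
`v² (1/u - 1/v) / log v = c · (v / u) · log ((u - c) / (1 - c)) / log v`. Both factors after `c`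
tend to `1` because `V(u) / u → 1` and logarithms of quantities with convergent positive ratio are
asymptotically equal (`tendsto_log_div_log`).
-/

/-- The logarithmic correction `log ((x - c) / (1 - c))` in the separated soliton equation. -/
noncomputable def logCorr (c x : ℝ) : ℝ := Real.log ((x - c) / (1 - c))

/-- The first integral of `u' = 4μ (u - c) / u`: along solutions with `u(0) = 1` it equals
`1 + 4μt`. It is meaningful for `x > max c 0`. -/
noncomputable def sepIntegral (c x : ℝ) : ℝ := x + c * logCorr c x

/-- `sepIntegral` on `[m, ∞)`, continued affinely with slope one to the left of `m`. -/
noncomputable def profile (c m x : ℝ) : ℝ := sepIntegral c (max x m) + (min x m - m)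

lemma sepIntegral_one {c : ℝ} (hc : c < 1) : sepIntegral c 1 = 1 := by
  have : (1 : ℝ) - c ≠ 0 := by linarith
  simp [sepIntegral, logCorr, div_self this]

lemma hasDerivAt_sepIntegral {c x : ℝ} (hc : c < 1) (hx : c < x) :
    HasDerivAt (sepIntegral c) (x / (x - c)) x := by
  have h1 : x - c ≠ 0 := by linarith
  have h2 : 1 - c ≠ 0 := by linarith
  have h := (((hasDerivAt_id x).sub_const c).div_const (1 - c)).log (div_ne_zero h1 h2)
  have h' := (hasDerivAt_id x).add (h.const_mul c)
  refine h'.congr_deriv ?_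
  simp only [id]
  field_simp
  ring

lemma strictMonoOn_sepIntegral {c m : ℝ} (hc : c < 1) (hcm : c < m) (hm : 0 < m) :
    StrictMonoOn (sepIntegral c) (Ici m) := by
  refine strictMonoOn_of_deriv_pos (convex_Ici m) ?_ ?_
  · intro x hx
    exact (hasDerivAt_sepIntegral hc (hcm.trans_le hx)).continuousAt.continuousWithinAt
  · intro x hx
    rw [interior_Ici] at hx
    have hx : m < x := hx
    rw [(hasDerivAt_sepIntegral hc (hcm.trans hx)).deriv]
    exact div_pos (hm.trans hx) (by linarith)

/-- If `f / g` has a positive limit and `g → ∞`, then `log f` and `log g` are asymptotically equal,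
since their difference converges. -/
lemma tendsto_log_div_log {f g : ℝ → ℝ} {k : ℝ} (hk : 0 < k)
    (hfg : Tendsto (fun x => f x / g x) atTop (nhds k)) (hg : Tendsto g atTop atTop) :
    Tendsto (fun x => Real.log (f x) / Real.log (g x)) atTop (nhds 1) := by
  have hlg : Tendsto (fun x => Real.log (g x)) atTop atTop := Real.tendsto_log_atTop.comp hg
  have h1 := (hfg.log hk.ne').div_atTop hlg
  have h2 := h1.const_add 1
  rw [add_zero] at h2
  refine h2.congr' ?_
  filter_upwards [hfg.eventually (lt_mem_nhds hk), hg.eventually_gt_atTop 0,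
    hlg.eventually_gt_atTop 0] with x h3 h4 h5
  have h6 : f x ≠ 0 := by
    rintro h
    simp [h] at h3
  rw [Real.log_div h6 h4.ne']
  field_simp
  ring

lemma tendsto_affine_ratio {c : ℝ} (hc : c < 1) :
    Tendsto (fun x : ℝ => (x - c) / (1 - c) / x) atTop (nhds (1 / (1 - c))) := by
  have h : Tendsto (fun x : ℝ => (1 - c / x) / (1 - c)) atTop (nhds ((1 - 0) / (1 - c))) :=
    ((tendsto_const_nhds.div_atTop tendsto_id).const_sub 1).div_const _
  rw [sub_zero] at h
  refine h.congr' ?_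
  filter_upwards [eventually_gt_atTop 0] with x hx
  have : 1 - c ≠ 0 := by linarith
  field_simp

lemma tendsto_logCorr_div_log {c : ℝ} (hc : c < 1) :
    Tendsto (fun x => logCorr c x / Real.log x) atTop (nhds 1) :=
  tendsto_log_div_log (by have : 0 < 1 - c := by linarith
                          positivity) (tendsto_affine_ratio hc) tendsto_id

lemma tendsto_sepIntegral_div {c : ℝ} (hc : c < 1) :
    Tendsto (fun x => sepIntegral c x / x) atTop (nhds 1) := by
  have hl : Tendsto (fun x : ℝ => Real.log x / x) atTop (nhds 0) :=
    Real.isLittleO_log_id_atTop.tendsto_div_nhds_zero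
  have h := (((tendsto_logCorr_div_log hc).mul hl).const_mul c).const_add 1
  simp only [mul_zero, add_zero] at h
  refine h.congr' ?_
  filter_upwards [eventually_gt_atTop 1] with x hx
  have h1 : Real.log x ≠ 0 := (Real.log_pos hx).ne'
  have h2 : x ≠ 0 := by linarith
  rw [sepIntegral]
  field_simp

lemma tendsto_sepIntegral {c : ℝ} (hc : c < 1) : Tendsto (sepIntegral c) atTop atTop := by
  refine ((tendsto_sepIntegral_div hc).pos_mul_atTop one_pos tendsto_id).congr' ?_
  filter_upwards [eventually_gt_atTop 0] with x hx
  simp only [id]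
  field_simp

/-- The decay asymptotic, expressed in the variable `x = u`, with `v = sepIntegral c x`. -/
lemma tendsto_asymptotic {c : ℝ} (hc : c < 1) :
    Tendsto (fun x => sepIntegral c x ^ 2 * (1 / x - 1 / sepIntegral c x) /
      Real.log (sepIntegral c x)) atTop (nhds c) := by
  have h1 := tendsto_log_div_log one_pos (tendsto_sepIntegral_div hc) tendsto_id
  have h2 := (((tendsto_logCorr_div_log hc).div h1 one_ne_zero).mul
    (tendsto_sepIntegral_div hc)).const_mul c
  simp only [div_one, mul_one] at h2
  refine h2.congr' ?_
  filter_upwards [eventually_gt_atTop 1, (tendsto_sepIntegral hc).eventually_gt_atTop 1]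
    with x hx hv
  have hlx : Real.log x ≠ 0 := (Real.log_pos hx).ne'
  have hlv : Real.log (sepIntegral c x) ≠ 0 := (Real.log_pos hv).ne'
  have hx0 : x ≠ 0 := by linarith
  have hv0 : sepIntegral c x ≠ 0 := by linarith
  have hd : c * logCorr c x = sepIntegral c x - x := by simp [sepIntegral]
  simp only [Pi.div_apply]
  field_simp
  linear_combination hd

lemma profile_of_le {c m x : ℝ} (h : m ≤ x) : profile c m x = sepIntegral c x := by
  simp [profile, h]

lemma profile_strictMono {c m : ℝ} (hc : c < 1) (hcm : c < m) (hm : 0 < m) :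
    StrictMono (profile c m) := by
  have hs := strictMonoOn_sepIntegral hc hcm hm
  intro x y hxy
  unfold profile
  rcases le_or_gt m x with h | h
  · rw [max_eq_left h, max_eq_left (h.trans hxy.le), min_eq_right h, min_eq_right (h.trans hxy.le)]
    have := hs h (h.trans hxy.le : m ≤ y) hxy
    linarith
  · have h1 : sepIntegral c (max x m) ≤ sepIntegral c (max y m) :=
      hs.monotoneOn (mem_Ici.2 (le_max_right _ _)) (mem_Ici.2 (le_max_right _ _)) (max_le_max_right m hxy.le)
    have h2 : min x m < min y m := by
      rw [min_eq_left h.le]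
      exact lt_min hxy h
    linarith

lemma profile_continuous {c m : ℝ} (hc : c < 1) (hcm : c < m) : Continuous (profile c m) := by
  have h : Continuous fun x => sepIntegral c (max x m) := by
    rw [continuous_iff_continuousAt]
    intro x
    exact ContinuousAt.comp (f := fun x => max x m)
      (hasDerivAt_sepIntegral hc (hcm.trans_le (le_max_right x m))).continuousAt
      (by fun_prop)
  unfold profile
  fun_prop

lemma profile_surjective {c m : ℝ} (hc : c < 1) (hcm : c < m) :
    Function.Surjective (profile c m) := by
  refine (profile_continuous hc hcm).surjective ?_ ?_
  · refine (tendsto_sepIntegral hc).congr' ?_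
    filter_upwards [eventually_ge_atTop m] with x hx
    exact (profile_of_le hx).symm
  · have h : Tendsto (fun x : ℝ => sepIntegral c m - m + x) atBot atBot :=
      tendsto_atBot_add_const_left _ _ tendsto_id
    refine h.congr' ?_
    filter_upwards [eventually_le_atBot m] with x hx
    rw [profile, max_eq_right hx, min_eq_left hx]
    ring

/-- A right inverse `ψ` of `sepIntegral c` on `[1, ∞)`, differentiable at the endpoint `1`. -/
lemma exists_inverse_profile {c : ℝ} (hc : c < 1) :
    ∃ ψ : ℝ → ℝ, ψ 1 = 1 ∧ StrictMono ψ ∧ Tendsto ψ atTop atTop ∧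
      ∀ v, 1 ≤ v → sepIntegral c (ψ v) = v ∧ HasDerivAt ψ ((ψ v - c) / ψ v) v := by
  obtain ⟨m, hm', hm1⟩ := exists_between (max_lt hc one_pos)
  have hcm : c < m := (le_max_left _ _).trans_lt hm'
  have hm : 0 < m := (le_max_right _ _).trans_lt hm'
  let e : ℝ ≃o ℝ := StrictMono.orderIsoOfSurjective (profile c m)
    (profile_strictMono hc hcm hm) (profile_surjective hc hcm)
  have he : ∀ x, e x = profile c m x := fun x => rfl
  have h1 : e.symm 1 = 1 := by
    rw [OrderIso.symm_apply_eq, he, profile_of_le hm1.le, sepIntegral_one hc]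
  refine ⟨e.symm, h1, e.symm.strictMono, e.symm.tendsto_atTop, fun v hv => ?_⟩
  have hψ : 1 ≤ e.symm v := h1 ▸ e.symm.monotone hv
  have hinv : ∀ y, profile c m (e.symm y) = y := fun y => by rw [← he, e.apply_symm_apply]
  refine ⟨by rw [← profile_of_le (hm1.le.trans hψ), hinv], ?_⟩
  have hd : HasDerivAt (profile c m) (e.symm v / (e.symm v - c)) (e.symm v) := by
    refine (hasDerivAt_sepIntegral hc (hc.trans_le hψ)).congr_of_eventuallyEq ?_
    filter_upwards [lt_mem_nhds (hm1.trans_le hψ)] with x hx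
    exact profile_of_le hx.le
  have hne : e.symm v / (e.symm v - c) ≠ 0 :=
    (div_pos (by linarith) (by linarith)).ne'
  have := HasDerivAt.of_local_left_inverse e.symm.continuous.continuousAt hd hne
    (Eventually.of_forall hinv)
  rwa [inv_div] at this

/-- Uniqueness for the soliton ODE; on a compact time interval both solutions stay in a ball, on
which the cubic vector field is Lipschitz. -/
lemma soliton_unique {lam mu T : ℝ} {a b : ℝ → ℝ}
    (ha : ∀ t ∈ Ico (0 : ℝ) T, HasDerivAt a (2 * lam * (a t) ^ 3 - 4 * mu * (a t) ^ 2) t)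
    (hb : ∀ t ∈ Ico (0 : ℝ) T, HasDerivAt b (2 * lam * (b t) ^ 3 - 4 * mu * (b t) ^ 2) t)
    (h0 : a 0 = b 0) : EqOn a b (Ico 0 T) := by
  intro t ht
  have hsub : ∀ s ∈ Icc 0 t, s ∈ Ico 0 T := fun s hs => ⟨hs.1, hs.2.trans_lt ht.2⟩
  have hac : ContinuousOn a (Icc 0 t) := fun s hs =>
    (ha s (hsub s hs)).continuousAt.continuousWithinAt
  have hbc : ContinuousOn b (Icc 0 t) := fun s hs =>
    (hb s (hsub s hs)).continuousAt.continuousWithinAt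
  obtain ⟨A, hA⟩ := isCompact_Icc.exists_bound_of_continuousOn hac
  obtain ⟨B, hB⟩ := isCompact_Icc.exists_bound_of_continuousOn hbc
  let p : ℝ → ℝ := fun x => 2 * lam * x ^ 3 - 4 * mu * x ^ 2
  have hp : ContDiff ℝ 1 p := by fun_prop
  obtain ⟨K, hK⟩ := hp.contDiffOn.exists_lipschitzOnWith one_ne_zero
    (convex_closedBall (0 : ℝ) (max A B)) (isCompact_closedBall _ _)
  refine ODE_solution_unique_of_mem_Icc_right (v := fun _ => p)
    (s := fun _ => Metric.closedBall 0 (max A B)) (K := K) (fun _ _ => hK)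
    hac (fun s hs => (ha s (hsub s (Ico_subset_Icc_self hs))).hasDerivWithinAt) ?_
    hbc (fun s hs => (hb s (hsub s (Ico_subset_Icc_self hs))).hasDerivWithinAt) ?_
    h0 (right_mem_Icc.2 ht.1)
  · intro s hs
    simpa using Or.inl (hA s (Ico_subset_Icc_self hs))
  · intro s hs
    simpa using Or.inr (hB s (Ico_subset_Icc_self hs))

/-- For `μ > 0` and `λ < 2μ`, the solution of the soliton ODE
`a' = 2λa³ - 4μa²` with `a(0) = 1` extends to a strictly decreasing positive
solution on `[0, ∞)` tending to `0` at infinity, with the refined decay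
asymptotic `(1+4μt)²·(a(t) - 1/(1+4μt))/log(1+4μt) → λ/(2μ)` as `t → ∞`. -/
theorem stmt_11 (lam mu : ℝ) (hmu : 0 < mu) (hlam : lam < 2 * mu)
    (T : ℝ) (hT : 0 < T) (a : ℝ → ℝ)
    (hsol : ∀ t ∈ Set.Ico (0 : ℝ) T,
      HasDerivAt a (2 * lam * (a t) ^ 3 - 4 * mu * (a t) ^ 2) t)
    (h0 : a 0 = 1) :
    ∃ b : ℝ → ℝ, Set.EqOn a b (Set.Ico (0 : ℝ) T) ∧ b 0 = 1 ∧
      (∀ t ∈ Set.Ici (0 : ℝ),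
        HasDerivAt b (2 * lam * (b t) ^ 3 - 4 * mu * (b t) ^ 2) t ∧ 0 < b t) ∧
      StrictAntiOn b (Set.Ici (0 : ℝ)) ∧
      Tendsto b atTop (nhds 0) ∧
      Tendsto (fun t => (1 + 4 * mu * t) ^ 2 * (b t - 1 / (1 + 4 * mu * t)) /
          Real.log (1 + 4 * mu * t))
        atTop (nhds (lam / (2 * mu))) := by
  have hc : lam / (2 * mu) < 1 := by rw [div_lt_one (by positivity)]; exact hlam
  obtain ⟨c, hcdef⟩ : ∃ c, c = lam / (2 * mu) := ⟨_, rfl⟩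
  have hlc : lam = 2 * mu * c := by rw [hcdef]; field_simp
  rw [← hcdef] at hc ⊢
  obtain ⟨ψ, hψ1, hψmono, hψtop, hψ⟩ := exists_inverse_profile hc
  have hv : ∀ t ∈ Ici (0 : ℝ), 1 ≤ 1 + 4 * mu * t := fun t ht => by
    have : 0 ≤ mu * t := mul_nonneg hmu.le ht
    linarith
  have hu : ∀ t ∈ Ici (0 : ℝ), 1 ≤ ψ (1 + 4 * mu * t) := fun t ht => by
    simpa [hψ1] using hψmono.monotone (hv t ht)
  have hlin : Tendsto (fun t : ℝ => 1 + 4 * mu * t) atTop atTop :=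
    tendsto_atTop_add_const_left _ _ (tendsto_id.const_mul_atTop (by positivity))
  have hutop : Tendsto (fun t => ψ (1 + 4 * mu * t)) atTop atTop := hψtop.comp hlin
  have hderiv : ∀ t ∈ Ici (0 : ℝ), HasDerivAt (fun t => 1 / ψ (1 + 4 * mu * t))
      (2 * lam * (1 / ψ (1 + 4 * mu * t)) ^ 3 - 4 * mu * (1 / ψ (1 + 4 * mu * t)) ^ 2) t := by
    intro t ht
    have hne : ψ (1 + 4 * mu * t) ≠ 0 := by linarith [hu t ht]
    have hl : HasDerivAt (fun t : ℝ => 1 + 4 * mu * t) (4 * mu) t := by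
      simpa using ((hasDerivAt_id t).const_mul (4 * mu)).const_add 1
    have h1 := ((hψ _ (hv t ht)).2.comp t hl).inv hne
    simp only [one_div]
    refine h1.congr_deriv ?_
    simp only [Function.comp_apply]
    rw [hlc]
    field_simp
    ring
  refine ⟨fun t => 1 / ψ (1 + 4 * mu * t), ?_, by simp [hψ1], ?_, ?_, ?_, ?_⟩
  · exact soliton_unique hsol (fun t ht => hderiv t ht.1) (by simp [h0, hψ1])
  · exact fun t ht => ⟨hderiv t ht, one_div_pos.2 (by linarith [hu t ht])⟩
  · intro s hs t ht hst
    refine one_div_lt_one_div_of_lt (by linarith [hu s hs]) (hψmono ?_)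
    have := mul_lt_mul_of_pos_left hst hmu
    linarith
  · exact tendsto_const_nhds.div_atTop hutop
  · refine ((tendsto_asymptotic hc).comp hutop).congr' ?_
    filter_upwards [eventually_ge_atTop 0] with t ht
    simp only [Function.comp_apply, (hψ _ (hv t ht)).1]
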